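/- For every n ≥ 2, the center of the affine braid group B(Ã_{n−1}) is trivial. -/

import Mathlib

/-- The braid relation word `s_i s_j s_i (s_j s_i s_j)⁻¹` in a free group. -/
def braidRelWord {I : Type*} (i j : I) : FreeGroup I :=
  FreeGroup.of i * FreeGroup.of j * FreeGroup.of i *
    (FreeGroup.of j * FreeGroup.of i * FreeGroup.of j)⁻¹

/-- The commutation relation word `s_i s_j (s_j s_i)⁻¹` in a free group. -/
def commRelWord {I : Type*} (i j : I) : FreeGroup I :=
  FreeGroup.of i * FreeGroup.of j * (FreeGroup.of j * FreeGroup.of i)⁻¹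

/-- The defining relations of the affine braid group `B(Ã_{n-1})`: for `n ≥ 3` the braid
relations `s_i s_{i+1} s_i = s_{i+1} s_i s_{i+1}` (`i ∈ ℤ/n`) and the commutation relations
`s_i s_j = s_j s_i` for `i - j ≠ ±1`; for `n = 2` there are no relations, so that
`B(Ã_1)` is the free group on two generators. -/
def affineBraidRels (n : ℕ) : Set (FreeGroup (ZMod n)) :=
  if n ≤ 2 then ∅
  else {r | (∃ i : ZMod n, r = braidRelWord i (i + 1)) ∨
            (∃ i j : ZMod n, i - j ≠ 1 ∧ i - j ≠ -1 ∧ r = commRelWord i j)}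

/-- The affine braid group `B(Ã_{n-1})`. -/
abbrev AffineBraidGroup (n : ℕ) := PresentedGroup (affineBraidRels n)

/-- The generator `s_i` of the affine braid group `B(Ã_{n-1})`, `i ∈ ℤ/n`. -/
def affineBraidGen (n : ℕ) (i : ZMod n) : AffineBraidGroup n := PresentedGroup.of i

/-!
For `n = 2` the group is free. Let `n ≥ 3` and let `A` be the affine braid group. It acts on the
free group `F` on `ℤ/n`, with `s_i` acting by the Artin automorphism `i ↦ i (i+1) i⁻¹`, `i + 1 ↦ i`.

Extend `A` by the cyclic group generated by the rotation `ρ`, where `ρ s_i ρ⁻¹ = s_{i+1}` and `ρ`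
acts on `F` by `i ↦ i + 1`. In the extended group the element `s_0 ⋯ s_{n-2} ρ⁻¹` and its conjugates
generate a copy of `F` acting on `F` by inner automorphisms, normalised by the braid group on
`s_0, …, s_{n-2}`. Comparing degrees in `ρ`, every element of `A` is a product of an element of this
copy with exponent sum zero and a braid, and every word of exponent sum zero is realised in `A`.

The action of `A` is faithful. If `w b` acts trivially, with `w` a word of exponent sum zero and `b`
a braid, then `w` commutes with the boundary word `0 1 ⋯ (n-1)`, which all braids fix and whose
exponent sum is nonzero. Since centralizers in `F` are cyclic, `w = 1`, and Artin's theorem gives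
`b = 1`. Artin's theorem is proved by induction on the number of strands: a braid fixing the
generator of strand `0` is a braid of the other strands times a product of loops of strand `0`
around them, and killing that generator separates the two factors.

A central element of `A` commutes with all inner automorphisms by words of exponent sum zero, so
it fixes all these words. As they form a nonabelian normal subgroup, it acts trivially on `F`, so
it is trivial.
-/

section FreeGroups

open FreeGroup (of lift)

variable {α : Type*}

theorem freeGroup_mulAut_ext {f g : MulAut (FreeGroup α)} (h : ∀ a, f (of a) = g (of a)) :
    f = g :=
  MulEquiv.toMonoidHom_injective (FreeGroup.ext_hom _ _ h)

/-- The homomorphism from a free group to `ℤ` sending every generator to `1`. -/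
def exponentSum : FreeGroup α →* Multiplicative ℤ := lift fun _ => Multiplicative.ofAdd 1

@[simp]
theorem exponentSum_of (a : α) : exponentSum (of a) = Multiplicative.ofAdd 1 :=
  FreeGroup.lift_apply_of ..

theorem exists_freeGroup_hom_of_injOn {ι H : Type*} [Nonempty ι] [Group H] {e : ι → α} {s : Set ι}
    (he : Set.InjOn e s) (f : ι → H) : ∃ φ : FreeGroup α →* H, ∀ i ∈ s, φ (of (e i)) = f i :=
  ⟨lift (f ∘ Function.invFunOn e s), fun i hi => by
    rw [FreeGroup.lift_apply_of, Function.comp_apply, he.leftInvOn_invFunOn hi]⟩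

theorem freeGroup_isConj_of_of_iff {p q : α} : IsConj (of p) (of q) ↔ p = q := by
  classical
  refine ⟨fun h => ?_, fun h => h ▸ IsConj.refl _⟩
  by_contra hne
  have hcount := MonoidHom.map_isConj
    (lift fun a => Multiplicative.ofAdd (if a = p then (1 : ℤ) else 0)) h
  simp [isConj_iff_eq, Ne.symm hne] at hcount

theorem freeGroup_center_eq_bot (α : Type*) [Nontrivial α] :
    Subgroup.center (FreeGroup α) = ⊥ := by
  classical
  refine (Subgroup.eq_bot_iff_forall _).2 fun z hz => ?_
  by_contra hne
  have hw : z.toWord ≠ [] := fun h => hne (FreeGroup.toWord_eq_nil_iff.1 h)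
  obtain ⟨y, hy⟩ := exists_ne (z.toWord.head hw).1
  -- The letter `ℓ` differs from the first letter of `z` and cancels at neither end of `z`.
  set ℓ : α × Bool := (y, (z.toWord.getLast hw).2)
  have hleft : FreeGroup.IsReduced ([ℓ] ++ z.toWord) := by
    refine List.IsChain.append (List.isChain_singleton _) FreeGroup.isReduced_toWord ?_
    simp [List.head?_eq_some_head hw, ℓ, hy]
  have hright : FreeGroup.IsReduced (z.toWord ++ [ℓ]) := by
    refine List.IsChain.append FreeGroup.isReduced_toWord (List.isChain_singleton _) ?_
    simp [List.getLast?_eq_getLast_of_ne_nil hw, ℓ]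
  have hwords : [ℓ] ++ z.toWord = z.toWord ++ [ℓ] := by
    rw [← hleft.reduce_eq, ← hright.reduce_eq]
    refine FreeGroup.reduce.sound ?_
    rw [← FreeGroup.mul_mk, ← FreeGroup.mul_mk, FreeGroup.mk_toWord]
    exact Subgroup.mem_center_iff.1 hz _
  have hhead := congrArg List.head? hwords
  rw [List.head?_append_of_ne_nil _ hw, List.head?_eq_some_head hw] at hhead
  exact hy (congrArg Prod.fst (Option.some.inj hhead))

theorem freeGroup_conj_injective [Nontrivial α] :
    Function.Injective (MulAut.conj : FreeGroup α →* MulAut (FreeGroup α)) := by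
  refine (injective_iff_map_eq_one _).2 fun z hz => ?_
  rw [← Subgroup.mem_bot, ← freeGroup_center_eq_bot α]
  exact Subgroup.mem_center_iff.2 fun y =>
    (mul_inv_eq_iff_eq_mul.1 (DFunLike.congr_fun hz y)).symm

theorem freeGroup_isCyclic_centralizer {g : FreeGroup α} (hg : g ≠ 1) :
    IsCyclic (Subgroup.centralizer {g}) := by
  set C := Subgroup.centralizer {g}
  -- By Nielsen–Schreier `C` is free, and it has the nontrivial central element `g`.
  let e := IsFreeGroup.toFreeGroup C
  suffices Subsingleton (IsFreeGroup.Generators C) by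
    rcases isEmpty_or_nonempty (IsFreeGroup.Generators C) with _ | _
    · have := e.subsingleton
      infer_instance
    · inhabit IsFreeGroup.Generators C
      have := Unique.mk' (IsFreeGroup.Generators C)
      exact isCyclic_of_surjective e.symm e.symm.surjective
  rw [← not_nontrivial_iff_subsingleton]
  intro _
  let γ : C := ⟨g, Subgroup.mem_centralizer_singleton_iff.2 rfl⟩
  have hγ : e γ ∈ Subgroup.center (FreeGroup (IsFreeGroup.Generators C)) := by
    refine Subgroup.mem_center_iff.2 (e.surjective.forall.2 fun h => ?_)
    rw [← map_mul, ← map_mul]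
    exact congrArg e (Subtype.ext (Subgroup.mem_centralizer_singleton_iff.1 h.2))
  rw [freeGroup_center_eq_bot, Subgroup.mem_bot, map_eq_one_iff e e.injective] at hγ
  exact hg (congrArg Subtype.val hγ)

theorem freeGroup_exists_zpow_of_commute {g : FreeGroup α} (hg : g ≠ 1) :
    ∃ c : FreeGroup α, ∀ h, Commute g h → ∃ k : ℤ, c ^ k = h := by
  obtain ⟨c, hc⟩ := (freeGroup_isCyclic_centralizer hg).exists_generator
  refine ⟨c, fun h hgh => ?_⟩
  obtain ⟨k, hk⟩ := hc ⟨h, Subgroup.mem_centralizer_singleton_iff.2 hgh.eq.symm⟩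
  exact ⟨k, congrArg Subtype.val hk⟩

theorem freeGroup_commute_trans {g h k : FreeGroup α} (hg : g ≠ 1) (hh : Commute g h)
    (hk : Commute g k) : Commute h k := by
  obtain ⟨c, hc⟩ := freeGroup_exists_zpow_of_commute hg
  obtain ⟨a, rfl⟩ := hc h hh
  obtain ⟨b, rfl⟩ := hc k hk
  exact Commute.zpow_zpow_self c a b

theorem freeGroup_map_eq_one_of_commute {H : Type*} [Group H] [IsMulTorsionFree H]
    (f : FreeGroup α →* H) {g h : FreeGroup α} (hg : g ≠ 1) (hfg : f g = 1) (hgh : Commute g h) :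
    f h = 1 := by
  obtain ⟨c, hc⟩ := freeGroup_exists_zpow_of_commute hg
  obtain ⟨a, rfl⟩ := hc g (Commute.refl g)
  obtain ⟨b, rfl⟩ := hc h hgh
  have ha : a ≠ 0 := fun ha => hg (by rw [ha, zpow_zero])
  rw [map_zpow, IsMulTorsionFree.zpow_eq_one_iff_left ha] at hfg
  rw [map_zpow, hfg, one_zpow]

theorem freeGroup_not_commute_of_mul_inv {i j : α} (hij : i ≠ j) :
    ¬ Commute (of i * (of j)⁻¹) ((of j)⁻¹ * of i) := by
  classical
  intro h
  have hperm := h.map (lift fun a => if a = i then (Equiv.swap 0 1 : Equiv.Perm (Fin 3))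
    else finRotate 3)
  simp only [map_mul, map_inv, FreeGroup.lift_apply_of, if_true, if_neg hij.symm,
    commute_iff_eq] at hperm
  revert hperm
  decide

theorem freeGroup_hom_eq_id_of_forall_mem_normal {N : Subgroup (FreeGroup α)} [N.Normal]
    {u v : FreeGroup α} (hu : u ∈ N) (hv : v ∈ N) (huv : ¬ Commute u v)
    {f : FreeGroup α →* FreeGroup α} (hf : ∀ y ∈ N, f y = y) : f = MonoidHom.id _ := by
  refine MonoidHom.ext fun x => ?_
  have hcomm : ∀ y ∈ N, Commute (x⁻¹ * f x) y := fun y hy => by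
    have hconj : f x * y * (f x)⁻¹ = x * y * x⁻¹ := by
      simpa only [map_mul, map_inv, hf y hy] using hf _ (Subgroup.Normal.conj_mem ‹_› y hy x)
    calc x⁻¹ * f x * y = x⁻¹ * (f x * y * (f x)⁻¹) * f x := by group
      _ = y * (x⁻¹ * f x) := by rw [hconj]; group
  by_contra hne
  exact huv (freeGroup_commute_trans (inv_mul_eq_one.not.2 (Ne.symm hne)) (hcomm u hu)
    (hcomm v hv))

end FreeGroups

section BraidSequences

variable {G : Type*} [Group G]

/-- The product `σ 0 * σ 1 * ⋯ * σ (k - 1)`. -/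
def partialProd (σ : ℕ → G) (k : ℕ) : G := ((List.range k).map σ).prod

@[simp]
theorem partialProd_zero (σ : ℕ → G) : partialProd σ 0 = 1 := rfl

theorem partialProd_succ (σ : ℕ → G) (k : ℕ) :
    partialProd σ (k + 1) = partialProd σ k * σ k :=
  List.prod_range_succ σ k

/-- The sequence `σ 1, σ 2, …`. -/
abbrev tailSeq (σ : ℕ → G) : ℕ → G := fun i => σ (i + 1)

theorem partialProd_succ' (σ : ℕ → G) (k : ℕ) :
    partialProd σ (k + 1) = σ 0 * partialProd (tailSeq σ) k :=
  List.prod_range_succ' σ k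

theorem semiconjBy_partialProd {g : G} {σ τ : ℕ → G} {k : ℕ}
    (h : ∀ i < k, SemiconjBy g (σ i) (τ i)) : SemiconjBy g (partialProd σ k) (partialProd τ k) := by
  induction k with
  | zero => exact SemiconjBy.one_right g
  | succ k ih =>
    rw [partialProd_succ, partialProd_succ]
    exact (ih fun i hi => h i (by omega)).mul_right (h k (by omega))

theorem commute_of_semiconjBy {g x y x' y' : G} (hx : SemiconjBy g x x') (hy : SemiconjBy g y y')
    (h : Commute x' y') : Commute x y :=
  mul_left_cancel (a := g) <| by
    rw [(hx.mul_right hy).eq, h.eq, ← (hy.mul_right hx).eq]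

theorem closure_le_normalizer_closure {s t : Set G}
    (h : ∀ g ∈ t, ∀ x ∈ s,
      g * x * g⁻¹ ∈ Subgroup.closure s ∧ g⁻¹ * x * g ∈ Subgroup.closure s) :
    Subgroup.closure t ≤ Subgroup.normalizer (Subgroup.closure s : Set G) := by
  have hconj : ∀ g : G, (∀ x ∈ s, g * x * g⁻¹ ∈ Subgroup.closure s) →
      ∀ u ∈ Subgroup.closure s, g * u * g⁻¹ ∈ Subgroup.closure s := fun g hg =>
    (Subgroup.closure_le ((Subgroup.closure s).comap (MulAut.conj g).toMonoidHom)).2 hg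
  refine (Subgroup.closure_le _).2 fun g hg => Subgroup.mem_normalizer_iff.2 fun u => ⟨?_, ?_⟩
  · exact hconj g (fun x hx => (h g hg x hx).1) u
  · intro hu
    simpa [mul_assoc] using
      hconj g⁻¹ (fun x hx => by simpa only [inv_inv] using (h g hg x hx).2) _ hu

/-- The conjugate of `a` by the inverse of `σ 0 * ⋯ * σ (k - 1)`. -/
def conjSeq (σ : ℕ → G) (a : G) (k : ℕ) : G := (partialProd σ k)⁻¹ * a * partialProd σ k

@[simp]
theorem conjSeq_zero (σ : ℕ → G) (a : G) : conjSeq σ a 0 = a := by simp [conjSeq]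

theorem conjSeq_succ (σ : ℕ → G) (a : G) (k : ℕ) :
    conjSeq σ a (k + 1) = (σ k)⁻¹ * conjSeq σ a k * σ k := by
  simp only [conjSeq, partialProd_succ, mul_inv_rev, mul_assoc]

theorem semiconjBy_conjSeq_succ (σ : ℕ → G) (a : G) (k : ℕ) :
    SemiconjBy (σ k) (conjSeq σ a (k + 1)) (conjSeq σ a k) := by
  simp [SemiconjBy, conjSeq_succ, mul_assoc]

/-- The subgroup generated by `σ 0, …, σ (m - 1)`. -/
def braidSubgroup (σ : ℕ → G) (m : ℕ) : Subgroup G := Subgroup.closure (σ '' Set.Iio m)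

/-- The subgroup generated by the conjugates `conjSeq σ a k` with `k ≤ m`. -/
def conjSubgroup (σ : ℕ → G) (a : G) (m : ℕ) : Subgroup G :=
  Subgroup.closure (conjSeq σ a '' Set.Iic m)

theorem mem_braidSubgroup (σ : ℕ → G) {m i : ℕ} (hi : i < m) : σ i ∈ braidSubgroup σ m :=
  Subgroup.subset_closure ⟨i, hi, rfl⟩

theorem conjSeq_mem_conjSubgroup (σ : ℕ → G) (a : G) {m k : ℕ} (hk : k ≤ m) :
    conjSeq σ a k ∈ conjSubgroup σ a m :=
  Subgroup.subset_closure ⟨k, hk, rfl⟩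

theorem braidSubgroup_le {σ : ℕ → G} {m : ℕ} {H : Subgroup G} (h : ∀ i < m, σ i ∈ H) :
    braidSubgroup σ m ≤ H :=
  (Subgroup.closure_le H).2 (Set.image_subset_iff.2 h)

theorem partialProd_mem_braidSubgroup (σ : ℕ → G) {m k : ℕ} (hk : k ≤ m) :
    partialProd σ k ∈ braidSubgroup σ m := by
  induction k with
  | zero => exact one_mem _
  | succ k ih =>
    rw [partialProd_succ]
    exact mul_mem (ih (by omega)) (mem_braidSubgroup σ hk)

/-- The elements `σ 0, …, σ (m - 1)` satisfy the relations of the braid group on `m + 1` strands. -/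
structure IsBraidSeq (σ : ℕ → G) (m : ℕ) : Prop where
  braid : ∀ i, i + 1 < m → σ i * σ (i + 1) * σ i = σ (i + 1) * σ i * σ (i + 1)
  comm : ∀ i j, i + 1 < j → j < m → Commute (σ i) (σ j)

namespace IsBraidSeq

variable {σ : ℕ → G} {m : ℕ}

theorem tail (h : IsBraidSeq σ (m + 1)) : IsBraidSeq (tailSeq σ) m where
  braid i hi := h.braid (i + 1) (by omega)
  comm i j hij hj := h.comm (i + 1) (j + 1) (by omega) (by omega)

theorem semiconjBy_mul_succ (h : IsBraidSeq σ m) {i : ℕ} (hi : i + 1 < m) :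
    SemiconjBy (σ i * σ (i + 1)) (σ i) (σ (i + 1)) := by
  rw [SemiconjBy, h.braid i hi, mul_assoc]

theorem semiconjBy_succ_mul (h : IsBraidSeq σ m) {i : ℕ} (hi : i + 1 < m) :
    SemiconjBy (σ (i + 1) * σ i) (σ (i + 1)) (σ i) := by
  rw [SemiconjBy, ← h.braid i hi, mul_assoc]

theorem commute_partialProd (h : IsBraidSeq σ m) {i k : ℕ} (hk : k < i) (hi : i < m) :
    Commute (σ i) (partialProd σ k) :=
  semiconjBy_partialProd fun j hj => (h.comm j i (by omega) hi).symm

theorem semiconjBy_partialProd_succ (h : IsBraidSeq σ m) {i k : ℕ} (hik : i + 1 < k)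
    (hk : k ≤ m) : SemiconjBy (partialProd σ k) (σ i) (σ (i + 1)) := by
  induction k, hik using Nat.le_induction with
  | base =>
    rw [partialProd_succ, partialProd_succ, mul_assoc]
    exact SemiconjBy.mul_left (h.commute_partialProd (by omega) hk).symm
      (h.semiconjBy_mul_succ hk)
  | succ k hik ih =>
    rw [partialProd_succ]
    exact (ih (by omega)).mul_left (h.comm i k hik hk).symm

theorem semiconjBy_partialProd_sq (h : IsBraidSeq σ m) {k : ℕ} (hk : k < m) :
    SemiconjBy (partialProd σ (k + 1) ^ 2) (σ k) (σ 0) := by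
  have hpass : SemiconjBy (partialProd σ (k + 1)) (partialProd σ k) (partialProd (tailSeq σ) k) :=
    semiconjBy_partialProd fun i hi => h.semiconjBy_partialProd_succ (by omega) hk
  have hsq : partialProd σ (k + 1) ^ 2 = σ 0 * (partialProd σ (k + 1) * partialProd σ k) := by
    rw [hpass.eq, ← mul_assoc, ← partialProd_succ', sq]
  calc partialProd σ (k + 1) ^ 2 * σ k
      = σ 0 * (partialProd σ (k + 1) * (partialProd σ k * σ k)) := by
        simp only [hsq, mul_assoc]
    _ = σ 0 * partialProd σ (k + 1) ^ 2 := by rw [← partialProd_succ, sq]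

theorem conjSeq_tail (h : IsBraidSeq σ m) {k : ℕ} (hk : k < m) :
    conjSeq (tailSeq σ) (σ 0) k = partialProd σ k * σ k * (partialProd σ k)⁻¹ := by
  have hfull : partialProd σ k * σ k = σ 0 * partialProd (tailSeq σ) k :=
    (partialProd_succ σ k).symm.trans (partialProd_succ' σ k)
  have hpass : SemiconjBy (partialProd σ (k + 1)) (partialProd σ k) (partialProd (tailSeq σ) k) :=
    semiconjBy_partialProd fun i hi => h.semiconjBy_partialProd_succ (by omega) hk
  rw [conjSeq, mul_assoc, ← hfull, eq_mul_inv_iff_mul_eq, mul_assoc, inv_mul_eq_iff_eq_mul,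
    ← partialProd_succ]
  exact hpass.eq

end IsBraidSeq

/-- The elements `σ 0, …, σ (m - 1)` and `a` satisfy the relations of the Artin group of type `B`,
generated by `(σ 0)⁻¹, …, (σ (m - 1))⁻¹` and `a`: in place of the relation of length four between
`a` and `σ 0`, we ask that `σ 0` commute with `a * ((σ 0)⁻¹ * a * σ 0)`. -/
structure IsTypeBSeq (σ : ℕ → G) (a : G) (m : ℕ) : Prop extends IsBraidSeq σ m where
  comm_base : ∀ i, 1 ≤ i → i < m → Commute (σ i) a
  comm_conj : 0 < m → Commute (σ 0) (a * ((σ 0)⁻¹ * a * σ 0))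

namespace IsTypeBSeq

variable {σ : ℕ → G} {a : G} {m : ℕ}

theorem commute_conjSeq_of_lt (h : IsTypeBSeq σ a m) {i j : ℕ} (hji : j < i) (hi : i < m) :
    Commute (σ i) (conjSeq σ a j) :=
  have hp := h.commute_partialProd hji hi
  (hp.inv_right.mul_right (h.comm_base i (by omega) hi)).mul_right hp

theorem commute_conjSeq_of_gt (h : IsTypeBSeq σ a m) {i j : ℕ} (hij : i + 1 < j) (hj : j ≤ m) :
    Commute (σ i) (conjSeq σ a j) := by
  refine commute_of_semiconjBy (h.semiconjBy_partialProd_succ hij hj) ?_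
    (h.comm_base (i + 1) (by omega) (by omega))
  simp [SemiconjBy, conjSeq, mul_assoc]

theorem commute_conjSeq_mul (h : IsTypeBSeq σ a m) {i : ℕ} (hi : i < m) :
    Commute (σ i) (conjSeq σ a i * conjSeq σ a (i + 1)) := by
  induction i with
  | zero => simpa [conjSeq_succ] using h.comm_conj hi
  | succ i ih =>
    have hfst : SemiconjBy (σ (i + 1) * σ i) (conjSeq σ a (i + 1)) (conjSeq σ a i) :=
      SemiconjBy.mul_left (h.commute_conjSeq_of_lt (lt_add_one i) hi)
        (semiconjBy_conjSeq_succ σ a i)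
    have hsnd : SemiconjBy (σ (i + 1) * σ i) (conjSeq σ a (i + 2)) (conjSeq σ a (i + 1)) :=
      (semiconjBy_conjSeq_succ σ a (i + 1)).mul_left
        (h.commute_conjSeq_of_gt (lt_add_one (i + 1)) hi)
    exact commute_of_semiconjBy (h.semiconjBy_succ_mul hi) (hfst.mul_right hsnd) (ih (by omega))

theorem conj_conjSeq_self (h : IsTypeBSeq σ a m) {i : ℕ} (hi : i < m) :
    σ i * conjSeq σ a i * (σ i)⁻¹ =
      conjSeq σ a i * conjSeq σ a (i + 1) * (conjSeq σ a i)⁻¹ := by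
  have hs := (semiconjBy_conjSeq_succ σ a i).inv_right
  rw [mul_inv_eq_iff_eq_mul]
  calc σ i * conjSeq σ a i
      = σ i * (conjSeq σ a i * conjSeq σ a (i + 1)) * (conjSeq σ a (i + 1))⁻¹ := by group
    _ = conjSeq σ a i * conjSeq σ a (i + 1) * (σ i * (conjSeq σ a (i + 1))⁻¹) := by
      rw [(h.commute_conjSeq_mul hi).eq, mul_assoc]
    _ = conjSeq σ a i * conjSeq σ a (i + 1) * (conjSeq σ a i)⁻¹ * σ i := by
      rw [hs.eq, mul_assoc _ _ (σ i)]

theorem inv_conj_conjSeq_succ (h : IsTypeBSeq σ a m) {i : ℕ} (hi : i < m) :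
    (σ i)⁻¹ * conjSeq σ a (i + 1) * σ i =
      (conjSeq σ a (i + 1))⁻¹ * conjSeq σ a i * conjSeq σ a (i + 1) := by
  have hs := (semiconjBy_conjSeq_succ σ a i).inv_right
  rw [mul_assoc, inv_mul_eq_iff_eq_mul]
  calc conjSeq σ a (i + 1) * σ i
      = (conjSeq σ a i)⁻¹ * (conjSeq σ a i * conjSeq σ a (i + 1) * σ i) := by group
    _ = (conjSeq σ a i)⁻¹ * σ i * (conjSeq σ a i * conjSeq σ a (i + 1)) := by
      rw [← (h.commute_conjSeq_mul hi).eq, mul_assoc]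
    _ = σ i * ((conjSeq σ a (i + 1))⁻¹ * conjSeq σ a i * conjSeq σ a (i + 1)) := by
      rw [← hs.eq]; simp only [mul_assoc]

theorem conj_conjSeq_mem (h : IsTypeBSeq σ a m) {i k : ℕ} (hi : i < m) (hk : k ≤ m) :
    σ i * conjSeq σ a k * (σ i)⁻¹ ∈ conjSubgroup σ a m ∧
      (σ i)⁻¹ * conjSeq σ a k * σ i ∈ conjSubgroup σ a m := by
  have hA := conjSeq_mem_conjSubgroup σ a hi.le
  have hA' := conjSeq_mem_conjSubgroup σ a (Nat.succ_le_of_lt hi)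
  have hfix (hc : Commute (σ i) (conjSeq σ a k)) :
      σ i * conjSeq σ a k * (σ i)⁻¹ ∈ conjSubgroup σ a m ∧
        (σ i)⁻¹ * conjSeq σ a k * σ i ∈ conjSubgroup σ a m := by
    rw [hc.mul_inv_cancel, hc.inv_mul_cancel]
    exact ⟨conjSeq_mem_conjSubgroup σ a hk, conjSeq_mem_conjSubgroup σ a hk⟩
  obtain hki | rfl | rfl | hik : k < i ∨ k = i ∨ k = i + 1 ∨ i + 1 < k := by omega
  · exact hfix (h.commute_conjSeq_of_lt hki hi)
  · rw [h.conj_conjSeq_self hi, ← conjSeq_succ]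
    exact ⟨mul_mem (mul_mem hA hA') (inv_mem hA), hA'⟩
  · rw [h.inv_conj_conjSeq_succ hi, (semiconjBy_conjSeq_succ σ a i).eq, mul_inv_cancel_right]
    exact ⟨hA, mul_mem (mul_mem (inv_mem hA') hA) hA'⟩
  · exact hfix (h.commute_conjSeq_of_gt hik hk)

theorem exists_mul_of_mem_sup (h : IsTypeBSeq σ a m) {g : G}
    (hg : g ∈ conjSubgroup σ a m ⊔ braidSubgroup σ m) :
    ∃ u ∈ conjSubgroup σ a m, ∃ b ∈ braidSubgroup σ m, u * b = g := by
  have hnorm : braidSubgroup σ m ≤ Subgroup.normalizer (conjSubgroup σ a m : Set G) :=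
    closure_le_normalizer_closure <| Set.forall_mem_image.2 fun _ hi =>
      Set.forall_mem_image.2 fun _ hk => h.conj_conjSeq_mem hi hk
  rw [← SetLike.mem_coe, Subgroup.coe_mul_of_right_le_normalizer_left _ _ hnorm] at hg
  exact Set.mem_mul.1 hg

end IsTypeBSeq

/-- In a braid group, the pure braid in which strand `0` makes a full turn around strand `k + 1`. -/
def strandLoop (σ : ℕ → G) (k : ℕ) : G := conjSeq (tailSeq σ) (σ 0 ^ 2)⁻¹ k

/-- The subgroup generated by the pure braids in which strand `0` turns around one of the strands
`1, …, m + 1`. -/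
def loopSubgroup (σ : ℕ → G) (m : ℕ) : Subgroup G := conjSubgroup (tailSeq σ) (σ 0 ^ 2)⁻¹ m

theorem strandLoop_mem_loopSubgroup (σ : ℕ → G) {m k : ℕ} (hk : k ≤ m) :
    strandLoop σ k ∈ loopSubgroup σ m :=
  conjSeq_mem_conjSubgroup _ _ hk

namespace IsBraidSeq

variable {σ : ℕ → G} {m : ℕ}

theorem strandLoop_eq (h : IsBraidSeq σ m) {k : ℕ} (hk : k < m) :
    strandLoop σ k = (partialProd σ k * σ k ^ 2 * (partialProd σ k)⁻¹)⁻¹ := by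
  rw [← conj_pow, ← h.conjSeq_tail hk, strandLoop, conjSeq, conjSeq]
  simp only [sq, mul_inv_rev, mul_assoc, inv_inv, mul_inv_cancel_left]

theorem isTypeBSeq_tail (h : IsBraidSeq σ (m + 1)) :
    IsTypeBSeq (tailSeq σ) (σ 0 ^ 2)⁻¹ m where
  toIsBraidSeq := h.tail
  comm_base i hi him := ((h.comm 0 (i + 1) (by omega) (by omega)).symm.pow_right 2).inv_right
  comm_conj hm := by
    have hbraid : σ 0 * σ 1 * σ 0 = σ 1 * σ 0 * σ 1 := h.braid 0 (by omega)
    have hcomm : Commute (σ 1) (σ 0 * σ 1 * (σ 1 * σ 0)) :=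
      ((h.semiconjBy_mul_succ (i := 0) (by omega)).mul_left
        (h.semiconjBy_succ_mul (i := 0) (by omega))).symm
    have hprod : (σ 1)⁻¹ * σ 0 ^ 2 * σ 1 * σ 0 ^ 2 = σ 0 * σ 1 * (σ 1 * σ 0) := by
      rw [mul_assoc, mul_assoc, inv_mul_eq_iff_eq_mul]
      calc σ 0 ^ 2 * (σ 1 * σ 0 ^ 2)
          = σ 0 * (σ 0 * σ 1 * σ 0) * σ 0 := by simp only [sq, mul_assoc]
        _ = σ 0 * (σ 1 * σ 0 * σ 1) * σ 0 := by rw [hbraid]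
        _ = σ 0 * σ 1 * σ 0 * (σ 1 * σ 0) := by simp only [mul_assoc]
        _ = σ 1 * (σ 0 * σ 1 * (σ 1 * σ 0)) := by rw [hbraid]; simp only [mul_assoc]
    convert hcomm.inv_right using 1
    rw [← hprod]
    simp only [mul_inv_rev, inv_inv, mul_assoc]

theorem partialProd_mul_mem (h : IsBraidSeq σ (m + 1)) {i k : ℕ} (hi : i ≤ m) (hk : k ≤ m + 1) :
    partialProd σ k * σ i * (partialProd σ (Equiv.swap i (i + 1) k))⁻¹ ∈
      loopSubgroup σ m ⊔ braidSubgroup (tailSeq σ) m := by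
  have hmem {j : ℕ} (hj : j < m) : σ (j + 1) ∈ loopSubgroup σ m ⊔ braidSubgroup (tailSeq σ) m :=
    Subgroup.mem_sup_right (mem_braidSubgroup (tailSeq σ) hj)
  obtain hki | rfl | rfl | hik : k < i ∨ k = i ∨ k = i + 1 ∨ i + 1 < k := by omega
  · obtain ⟨j, rfl⟩ := Nat.exists_eq_add_of_lt (Nat.zero_lt_of_lt hki)
    rw [Equiv.swap_apply_of_ne_of_ne (by omega) (by omega),
      ← (h.commute_partialProd hki (by omega)).eq, mul_inv_cancel_right]
    simpa using hmem (j := j) (by omega)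
  · rw [Equiv.swap_apply_left, partialProd_succ, mul_inv_cancel]
    exact one_mem _
  · have hloop := inv_mem (Subgroup.mem_sup_left (strandLoop_mem_loopSubgroup σ hi) :
      _ ∈ loopSubgroup σ m ⊔ braidSubgroup (tailSeq σ) m)
    rw [h.strandLoop_eq (by omega), inv_inv] at hloop
    simpa only [Equiv.swap_apply_right, partialProd_succ, sq, mul_assoc] using hloop
  · rw [Equiv.swap_apply_of_ne_of_ne (by omega) (by omega),
      (h.semiconjBy_partialProd_succ hik hk).eq, mul_inv_cancel_right]
    exact hmem (by omega)

theorem exists_eq_mul_mul_partialProd (h : IsBraidSeq σ (m + 1)) {g : G}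
    (hg : g ∈ braidSubgroup σ (m + 1)) :
    ∃ u ∈ loopSubgroup σ m, ∃ b ∈ braidSubgroup (tailSeq σ) m, ∃ k ≤ m + 1,
      g = u * b * partialProd σ k := by
  suffices ∃ k ≤ m + 1, g * (partialProd σ k)⁻¹ ∈
      loopSubgroup σ m ⊔ braidSubgroup (tailSeq σ) m by
    obtain ⟨k, hk, hmem⟩ := this
    obtain ⟨u, hu, b, hb, hub⟩ := h.isTypeBSeq_tail.exists_mul_of_mem_sup hmem
    exact ⟨u, hu, b, hb, k, hk, eq_mul_of_mul_inv_eq hub.symm⟩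
  have hswap {i k : ℕ} (hi : i ≤ m) (hk : k ≤ m + 1) : Equiv.swap i (i + 1) k ≤ m + 1 := by
    rw [Equiv.swap_apply_def]
    split_ifs <;> omega
  induction hg using Subgroup.closure_induction_right with
  | one => exact ⟨0, by omega, by simp⟩
  | mul_right x _ y hy ih =>
    obtain ⟨i, hi, rfl⟩ := hy
    obtain ⟨k, hk, hx⟩ := ih
    refine ⟨_, hswap (Nat.lt_succ_iff.1 hi) hk, ?_⟩
    convert mul_mem hx (h.partialProd_mul_mem (Nat.lt_succ_iff.1 hi) hk) using 1
    group
  | mul_inv_cancel x _ y hy ih =>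
    obtain ⟨i, hi, rfl⟩ := hy
    obtain ⟨k, hk, hx⟩ := ih
    have hk' := hswap (Nat.lt_succ_iff.1 hi) hk
    refine ⟨_, hk', ?_⟩
    convert mul_mem hx (inv_mem (h.partialProd_mul_mem (Nat.lt_succ_iff.1 hi) hk')) using 1
    rw [Equiv.swap_apply_self]
    group

end IsBraidSeq

end BraidSequences

section ArtinAction

open FreeGroup (of lift)

variable {α : Type*}

open Classical in
/-- The endomorphism of a free group killing the generator `p`. -/
noncomputable def killHom (p : α) : FreeGroup α →* FreeGroup α := lift (Function.update of p 1)

@[simp]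
theorem killHom_self (p : α) : killHom p (of p) = 1 := by simp [killHom]

theorem killHom_of_ne {p a : α} (h : a ≠ p) : killHom p (of a) = of a := by simp [killHom, h]

variable {G : Type*} [Group G] [MulDistribMulAction G (FreeGroup α)]

/-- The element `g` acts on the free group as the Artin automorphism
`p ↦ p q p⁻¹`, `q ↦ p`, fixing the other generators. -/
structure IsArtinTwist (g : G) (p q : α) : Prop where
  smul_left : g • (of p : FreeGroup α) = of p * of q * (of p)⁻¹
  smul_right : g • (of q : FreeGroup α) = of p
  smul_of_ne : ∀ a, a ≠ p → a ≠ q → g • (of a : FreeGroup α) = of a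

namespace IsArtinTwist

variable {g : G} {p q : α}

theorem smul_mul (h : IsArtinTwist g p q) : g • (of p * of q : FreeGroup α) = of p * of q := by
  rw [smul_mul', h.smul_left, h.smul_right, inv_mul_cancel_right]

theorem sq_inv_smul_left (h : IsArtinTwist g p q) :
    (g ^ 2)⁻¹ • (of p : FreeGroup α) = (of p * of q)⁻¹ * of p * (of p * of q) := by
  rw [inv_smul_eq_iff, sq, mul_smul]
  simp only [smul_mul', smul_inv', h.smul_left, h.smul_right]
  group

theorem killHom_smul (h : IsArtinTwist g p q) {r : α} (hp : p ≠ r) (hq : q ≠ r)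
    (y : FreeGroup α) : killHom r (g • y) = g • killHom r y := by
  let γ := MulDistribMulAction.toMonoidHom (FreeGroup α) g
  suffices (killHom r).comp γ = γ.comp (killHom r) from DFunLike.congr_fun this y
  refine FreeGroup.ext_hom _ _ fun a => ?_
  change killHom r (g • of a) = g • killHom r (of a)
  by_cases hap : a = p
  · subst hap
    simp [h.smul_left, killHom_of_ne hp, killHom_of_ne hq]
  by_cases haq : a = q
  · subst haq
    rw [h.smul_right, killHom_of_ne hp, killHom_of_ne hq, h.smul_right]
  rw [h.smul_of_ne a hap haq]
  by_cases har : a = r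
  · rw [har, killHom_self, smul_one]
  · rw [killHom_of_ne har, h.smul_of_ne a hap haq]

theorem killHom_sq_smul (h : IsArtinTwist g p q) (y : FreeGroup α) :
    killHom p (g ^ 2 • y) = killHom p y := by
  let γ := MulDistribMulAction.toMonoidHom (FreeGroup α) (g ^ 2)
  suffices (killHom p).comp γ = killHom p from DFunLike.congr_fun this y
  refine FreeGroup.ext_hom _ _ fun a => ?_
  change killHom p (g ^ 2 • of a) = killHom p (of a)
  rw [sq, mul_smul]
  by_cases hap : a = p
  · subst hap
    simp [h.smul_left, h.smul_right]
  by_cases haq : a = q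
  · subst haq
    simp [h.smul_left, h.smul_right]
  rw [h.smul_of_ne a hap haq, h.smul_of_ne a hap haq]

end IsArtinTwist

/-- The elements `σ 0, …, σ (m - 1)` satisfy the braid relations and act on a free group by the
Artin automorphisms attached to consecutive generators among `e 0, …, e m`. -/
structure IsArtinSeq (σ : ℕ → G) (e : ℕ → α) (m : ℕ) : Prop extends IsBraidSeq σ m where
  injOn : Set.InjOn e (Set.Iic m)
  twist : ∀ i < m, IsArtinTwist (σ i) (e i) (e (i + 1))

/-- The product `e 0 * e 1 * ⋯ * e (k - 1)` of generators, which is the class of a loop around the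
first `k` punctures in the fundamental group of the punctured disc. -/
def boundaryWord (e : ℕ → α) (k : ℕ) : FreeGroup α := partialProd (fun j => of (e j)) k

theorem boundaryWord_succ (e : ℕ → α) (k : ℕ) :
    boundaryWord e (k + 1) = boundaryWord e k * of (e k) :=
  partialProd_succ _ k

theorem exponentSum_boundaryWord (e : ℕ → α) (k : ℕ) :
    exponentSum (boundaryWord e k) = Multiplicative.ofAdd (k : ℤ) := by
  induction k with
  | zero => simp [boundaryWord]
  | succ k ih => rw [boundaryWord_succ, map_mul, ih, exponentSum_of, ← ofAdd_add, Nat.cast_succ]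

namespace IsArtinSeq

variable {σ : ℕ → G} {e : ℕ → α} {m : ℕ}

theorem ne (h : IsArtinSeq σ e m) {i j : ℕ} (hi : i ≤ m) (hj : j ≤ m) (hij : i ≠ j) :
    e i ≠ e j :=
  h.injOn.ne hi hj hij

theorem tail (h : IsArtinSeq σ e (m + 1)) : IsArtinSeq (tailSeq σ) (tailSeq e) m where
  toIsBraidSeq := h.toIsBraidSeq.tail
  injOn i hi j hj hij := by simpa using h.injOn (Nat.succ_le_succ hi) (Nat.succ_le_succ hj) hij
  twist i hi := h.twist (i + 1) (by omega)

theorem smul_of_apply_ne (h : IsArtinSeq σ e m) {i k : ℕ} (hi : i < m) (hk : k ≤ m) (hki : k ≠ i)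
    (hki' : k ≠ i + 1) : σ i • (of (e k) : FreeGroup α) = of (e k) :=
  (h.twist i hi).smul_of_ne _ (h.ne hk (by omega) hki) (h.ne hk (by omega) hki')

theorem partialProd_inv_smul_zero (h : IsArtinSeq σ e m) {k : ℕ} (hk : k ≤ m) :
    (partialProd σ k)⁻¹ • (of (e 0) : FreeGroup α) = of (e k) := by
  induction k with
  | zero => simp
  | succ k ih =>
    rw [partialProd_succ, mul_inv_rev, mul_smul, ih (by omega), inv_smul_eq_iff,
      (h.twist k hk).smul_right]

theorem partialProd_smul_of_gt (h : IsArtinSeq σ e m) {j k : ℕ} (hjk : j < k) (hk : k ≤ m) :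
    partialProd σ j • (of (e k) : FreeGroup α) = of (e k) := by
  induction j with
  | zero => exact one_smul _ _
  | succ j ih =>
    rw [partialProd_succ, mul_smul, h.smul_of_apply_ne (by omega) hk (by omega) (by omega),
      ih (by omega)]

theorem partialProd_smul_of_lt (h : IsArtinSeq σ e m) {j k : ℕ} (hkj : k < j) (hj : j ≤ m) :
    partialProd σ j • (of (e k) : FreeGroup α) = of (e 0) * of (e (k + 1)) * (of (e 0))⁻¹ := by
  induction j, hkj using Nat.le_induction with
  | base =>
    have hk : partialProd σ k • (of (e k) : FreeGroup α) = of (e 0) := by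
      rw [← h.partialProd_inv_smul_zero (by omega), smul_inv_smul]
    rw [partialProd_succ, mul_smul, (h.twist k hj).smul_left, smul_mul', smul_mul', smul_inv', hk,
      h.partialProd_smul_of_gt (lt_add_one k) hj]
  | succ j hkj ih =>
    rw [partialProd_succ, mul_smul,
      h.smul_of_apply_ne (by omega) (by omega) (by omega) (by omega), ih (by omega)]

theorem smul_boundaryWord (h : IsArtinSeq σ e m) {i : ℕ} (hi : i < m) :
    σ i • boundaryWord e (m + 1) = boundaryWord e (m + 1) := by
  have hlow : ∀ k ≤ i, σ i • boundaryWord e k = boundaryWord e k := by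
    intro k hk
    induction k with
    | zero => exact smul_one _
    | succ k ih =>
      rw [boundaryWord_succ, smul_mul', ih (by omega),
        h.smul_of_apply_ne hi (by omega) (by omega) (by omega)]
  have hhigh : ∀ k, i + 2 ≤ k → k ≤ m + 1 → σ i • boundaryWord e k = boundaryWord e k := by
    intro k hik hk
    induction k, hik using Nat.le_induction with
    | base =>
      rw [boundaryWord_succ, boundaryWord_succ, mul_assoc, smul_mul', hlow i le_rfl,
        (h.twist i hi).smul_mul]
    | succ k hik ih =>
      rw [boundaryWord_succ, smul_mul', ih (by omega),
        h.smul_of_apply_ne hi (by omega) (by omega) (by omega)]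
  exact hhigh (m + 1) (by omega) le_rfl

theorem smul_boundaryWord_of_mem (h : IsArtinSeq σ e m) {b : G} (hb : b ∈ braidSubgroup σ m) :
    b • boundaryWord e (m + 1) = boundaryWord e (m + 1) :=
  braidSubgroup_le (H := MulAction.stabilizer G (boundaryWord e (m + 1)))
    (fun _ hi => h.smul_boundaryWord hi) hb

theorem smul_zero_of_mem_tail (h : IsArtinSeq σ e (m + 1)) {b : G}
    (hb : b ∈ braidSubgroup (tailSeq σ) m) : b • (of (e 0) : FreeGroup α) = of (e 0) :=
  braidSubgroup_le (H := MulAction.stabilizer G (of (e 0) : FreeGroup α))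
    (fun _ hi => h.smul_of_apply_ne (by omega) (by omega) (by omega) (by omega)) hb

theorem killHom_smul_of_mem_tail (h : IsArtinSeq σ e (m + 1)) {b : G}
    (hb : b ∈ braidSubgroup (tailSeq σ) m) (y : FreeGroup α) :
    killHom (e 0) (b • y) = b • killHom (e 0) y := by
  induction hb using Subgroup.closure_induction generalizing y with
  | mem _ hx =>
    obtain ⟨i, hi, rfl⟩ := hx
    have hi' : i < m := hi
    exact (h.twist (i + 1) (by omega)).killHom_smul (h.ne (by omega) (by omega) (by omega))
      (h.ne (by omega) (by omega) (by omega)) y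
  | one => simp only [one_smul]
  | mul x y _ _ hx hy => rw [mul_smul, hx, hy, mul_smul]
  | inv x _ hx => rw [eq_inv_smul_iff, ← hx, smul_inv_smul]

theorem killHom_smul_of_mem_loopSubgroup (h : IsArtinSeq σ e (m + 1)) {u : G}
    (hu : u ∈ loopSubgroup σ m) (y : FreeGroup α) : killHom (e 0) (u • y) = killHom (e 0) y := by
  induction hu using Subgroup.closure_induction generalizing y with
  | mem _ hx =>
    obtain ⟨k, hk, rfl⟩ := hx
    have hp := partialProd_mem_braidSubgroup (tailSeq σ) hk
    have hsq (z : FreeGroup α) : killHom (e 0) ((σ 0 ^ 2)⁻¹ • z) = killHom (e 0) z := by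
      rw [← (h.twist 0 (by omega)).killHom_sq_smul, smul_inv_smul]
    rw [conjSeq, mul_smul, mul_smul, h.killHom_smul_of_mem_tail (inv_mem hp), hsq,
      h.killHom_smul_of_mem_tail hp, inv_smul_smul]
  | one => rw [one_smul]
  | mul x z _ _ hx hz => rw [mul_smul, hx, hz]
  | inv x _ hx => rw [← hx, smul_inv_smul]

theorem strandLoop_smul_zero (h : IsArtinSeq σ e (m + 1)) {k : ℕ} (hk : k ≤ m) :
    strandLoop σ k • (of (e 0) : FreeGroup α) =
      (of (e 0) * of (e (k + 1)))⁻¹ * of (e 0) * (of (e 0) * of (e (k + 1))) := by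
  have hp := partialProd_mem_braidSubgroup (tailSeq σ) hk
  rw [strandLoop, conjSeq, mul_smul, mul_smul, h.smul_zero_of_mem_tail hp,
    (h.twist 0 (by omega)).sq_inv_smul_left]
  simp only [smul_mul', smul_inv', h.smul_zero_of_mem_tail (inv_mem hp),
    h.tail.partialProd_inv_smul_zero hk]

theorem exists_smul_zero_eq_conj (h : IsArtinSeq σ e (m + 1)) {φ : FreeGroup α →* G}
    (hφ : ∀ k ≤ m, φ (of (e (k + 1))) = strandLoop σ k) {u : G} (hu : u ∈ loopSubgroup σ m) :
    ∃ W : FreeGroup α, u • of (e 0) = W * of (e 0) * W⁻¹ ∧ φ (killHom (e 0) W) = u⁻¹ := by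
  induction hu using Subgroup.closure_induction with
  | mem _ hx =>
    obtain ⟨k, hk, rfl⟩ := hx
    have hk' : k ≤ m := hk
    refine ⟨(of (e 0) * of (e (k + 1)))⁻¹, ?_, ?_⟩
    · rw [inv_inv]
      exact h.strandLoop_smul_zero hk
    · rw [map_inv, map_mul, killHom_self, one_mul,
        killHom_of_ne (h.ne (by omega) (by omega) (by omega)), map_inv, hφ k hk, strandLoop]
  | one => exact ⟨1, by simp, by simp⟩
  | mul x y hx _ ihx ihy =>
    obtain ⟨V, hV, hφV⟩ := ihx
    obtain ⟨W, hW, hφW⟩ := ihy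
    refine ⟨x • W * V, ?_, ?_⟩
    · rw [mul_smul, hW, smul_mul', smul_mul', smul_inv', hV]
      group
    · rw [map_mul, h.killHom_smul_of_mem_loopSubgroup hx, map_mul, hφV, hφW, mul_inv_rev]
  | inv x hx ih =>
    obtain ⟨W, hW, hφW⟩ := ih
    refine ⟨(x⁻¹ • W)⁻¹, ?_, ?_⟩
    · rw [inv_smul_eq_iff]
      simp only [smul_mul', smul_inv', smul_inv_smul, hW]
      group
    · rw [map_inv, h.killHom_smul_of_mem_loopSubgroup (inv_mem hx), map_inv, hφW]

theorem eq_one_of_mem_loopSubgroup (h : IsArtinSeq σ e (m + 1)) {u : G}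
    (hu : u ∈ loopSubgroup σ m) (hfix : u • (of (e 0) : FreeGroup α) = of (e 0)) : u = 1 := by
  obtain ⟨φ, hφ⟩ := exists_freeGroup_hom_of_injOn h.injOn fun i => strandLoop σ (i - 1)
  obtain ⟨W, hW, hφW⟩ :=
    h.exists_smul_zero_eq_conj (fun k hk => hφ (k + 1) (Nat.succ_le_succ hk)) hu
  have hcomm : Commute (of (e 0)) W := by
    rw [hfix] at hW
    exact eq_mul_inv_iff_mul_eq.1 hW
  have hkill : killHom (e 0) W = 1 :=
    freeGroup_map_eq_one_of_commute _ (FreeGroup.of_ne_one _) (killHom_self _) hcomm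
  rwa [hkill, map_one, eq_comm, inv_eq_one] at hφW

theorem eq_zero_of_smul_eq (h : IsArtinSeq σ e (m + 1)) {u b : G} {k : ℕ}
    (hu : u ∈ loopSubgroup σ m) (hb : b ∈ braidSubgroup (tailSeq σ) m) (hk : k ≤ m + 1)
    (hfix : (u * b * partialProd σ k) • (of (e k) : FreeGroup α) = of (e k)) : k = 0 := by
  obtain ⟨φ, hφ⟩ := exists_freeGroup_hom_of_injOn h.injOn fun i => strandLoop σ (i - 1)
  obtain ⟨W, hW, -⟩ :=
    h.exists_smul_zero_eq_conj (fun k hk => hφ (k + 1) (Nat.succ_le_succ hk)) hu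
  have hmove : partialProd σ k • (of (e k) : FreeGroup α) = of (e 0) := by
    rw [← h.partialProd_inv_smul_zero hk, smul_inv_smul]
  rw [mul_smul, mul_smul, hmove, h.smul_zero_of_mem_tail hb, hW] at hfix
  have heq : e 0 = e k := freeGroup_isConj_of_of_iff.1 (isConj_iff.2 ⟨W, hfix⟩)
  exact (h.injOn (Nat.zero_le _) hk heq).symm

theorem smul_eq_of_forall_mul_smul_eq (h : IsArtinSeq σ e (m + 1)) {u b : G}
    (hu : u ∈ loopSubgroup σ m) (hb : b ∈ braidSubgroup (tailSeq σ) m)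
    (hact : ∀ y : FreeGroup α, (u * b) • y = y) (y : FreeGroup α) : b • y = y := by
  suffices MulDistribMulAction.toMonoidHom (FreeGroup α) b = MonoidHom.id _ from
    DFunLike.congr_fun this y
  refine FreeGroup.ext_hom _ _ fun a => ?_
  change b • of a = of a
  by_cases ha : a = e 0
  · rw [ha, h.smul_zero_of_mem_tail hb]
  · have hkill := congrArg (killHom (e 0)) (hact (of a))
    rwa [mul_smul, h.killHom_smul_of_mem_loopSubgroup hu, h.killHom_smul_of_mem_tail hb,
      killHom_of_ne ha] at hkill

/-- **Artin's theorem**: the Artin representation of the braid group is faithful. -/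
theorem eq_one_of_forall_smul_eq (h : IsArtinSeq σ e m) {g : G} (hg : g ∈ braidSubgroup σ m)
    (hact : ∀ y : FreeGroup α, g • y = y) : g = 1 := by
  induction m generalizing σ e g with
  | zero => simpa [braidSubgroup] using hg
  | succ m ih =>
    obtain ⟨u, hu, b, hb, k, hk, rfl⟩ := h.exists_eq_mul_mul_partialProd hg
    obtain rfl := h.eq_zero_of_smul_eq hu hb hk (hact _)
    rw [partialProd_zero, mul_one] at hact ⊢
    obtain rfl := ih h.tail hb (h.smul_eq_of_forall_mul_smul_eq hu hb hact)
    rw [mul_one] at hact ⊢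
    exact h.eq_one_of_mem_loopSubgroup hu (hact _)

end IsArtinSeq

end ArtinAction

section ArtinAut

open FreeGroup (of lift)

variable {α : Type*} [DecidableEq α]

/-- The endomorphism `p ↦ p q p⁻¹`, `q ↦ p` of a free group, fixing the other generators. -/
def artinHom (p q : α) : FreeGroup α →* FreeGroup α :=
  lift (Function.update (Function.update of q (of p)) p (of p * of q * (of p)⁻¹))

/-- The endomorphism `p ↦ q`, `q ↦ q⁻¹ p q` of a free group, inverse to `artinHom p q`. -/
def artinInvHom (p q : α) : FreeGroup α →* FreeGroup α :=
  lift (Function.update (Function.update of p (of q)) q ((of q)⁻¹ * of p * of q))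

theorem artinHom_left (p q : α) : artinHom p q (of p) = of p * of q * (of p)⁻¹ := by
  simp [artinHom]

theorem artinHom_right (p q : α) : artinHom p q (of q) = of p := by
  obtain rfl | h := eq_or_ne q p <;> simp [artinHom, *]

theorem artinHom_of_ne {p q a : α} (hp : a ≠ p) (hq : a ≠ q) : artinHom p q (of a) = of a := by
  simp [artinHom, hp, hq]

theorem artinInvHom_left (p q : α) : artinInvHom p q (of p) = of q := by
  obtain rfl | h := eq_or_ne p q <;> simp [artinInvHom, *]

theorem artinInvHom_right (p q : α) : artinInvHom p q (of q) = (of q)⁻¹ * of p * of q := by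
  simp [artinInvHom]

theorem artinInvHom_of_ne {p q a : α} (hp : a ≠ p) (hq : a ≠ q) :
    artinInvHom p q (of a) = of a := by
  simp [artinInvHom, hp, hq]

/-- The Artin automorphism of a free group: `p ↦ p q p⁻¹`, `q ↦ p`, fixing the other generators.
It is the identity when `p = q`. -/
def artinAut (p q : α) : MulAut (FreeGroup α) :=
  MonoidHom.toMulEquiv (artinHom p q) (artinInvHom p q)
    (FreeGroup.ext_hom _ _ fun a => by
      obtain rfl | hp := eq_or_ne a p
      · simp [artinHom_left, artinInvHom_left, artinInvHom_right, mul_assoc]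
      obtain rfl | hq := eq_or_ne a q
      · simp [artinHom_right, artinInvHom_left]
      · simp [artinHom_of_ne hp hq, artinInvHom_of_ne hp hq])
    (FreeGroup.ext_hom _ _ fun a => by
      obtain rfl | hp := eq_or_ne a p
      · simp [artinHom_right, artinInvHom_left]
      obtain rfl | hq := eq_or_ne a q
      · simp [artinHom_left, artinHom_right, artinInvHom_right, mul_assoc]
      · simp [artinHom_of_ne hp hq, artinInvHom_of_ne hp hq])

@[simp]
theorem artinAut_left (p q : α) : artinAut p q (of p) = of p * of q * (of p)⁻¹ :=
  artinHom_left p q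

@[simp]
theorem artinAut_right (p q : α) : artinAut p q (of q) = of p := artinHom_right p q

theorem artinAut_of_ne {p q a : α} (hp : a ≠ p) (hq : a ≠ q) : artinAut p q (of a) = of a :=
  artinHom_of_ne hp hq

theorem artinAut_braid {p q r : α} (hpq : p ≠ q) (hqr : q ≠ r) (hpr : p ≠ r) :
    artinAut p q * artinAut q r * artinAut p q = artinAut q r * artinAut p q * artinAut q r := by
  refine freeGroup_mulAut_ext fun a => ?_
  simp only [MulAut.mul_apply]
  obtain rfl | hp := eq_or_ne a p
  · simp [artinAut_of_ne hpq hpr, artinAut_of_ne hpr.symm hqr.symm, mul_assoc]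
  obtain rfl | hq := eq_or_ne a q
  · simp [artinAut_of_ne hpq hpr, artinAut_of_ne hpr.symm hqr.symm]
  obtain rfl | hr := eq_or_ne a r
  · simp [artinAut_of_ne hpq hpr, artinAut_of_ne hpr.symm hqr.symm]
  simp [artinAut_of_ne, hp, hq, hr]

theorem artinAut_commute {p q p' q' : α} (hpp : p ≠ p') (hpq : p ≠ q') (hqp : q ≠ p')
    (hqq : q ≠ q') : Commute (artinAut p q) (artinAut p' q') := by
  refine freeGroup_mulAut_ext fun a => ?_
  simp only [MulAut.mul_apply]
  obtain rfl | hp := eq_or_ne a p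
  · simp [artinAut_of_ne hpp hpq, artinAut_of_ne hqp hqq]
  obtain rfl | hq := eq_or_ne a q
  · simp [artinAut_of_ne hpp hpq, artinAut_of_ne hqp hqq]
  obtain rfl | hp' := eq_or_ne a p'
  · simp [artinAut_of_ne hpp.symm hqp.symm, artinAut_of_ne hpq.symm hqq.symm]
  obtain rfl | hq' := eq_or_ne a q'
  · simp [artinAut_of_ne hpp.symm hqp.symm, artinAut_of_ne hpq.symm hqq.symm]
  simp [artinAut_of_ne, hp, hq, hp', hq']

theorem freeGroupCongr_mul_artinAut (e : Equiv.Perm α) (p q : α) :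
    FreeGroup.freeGroupCongr e * artinAut p q =
      artinAut (e p) (e q) * FreeGroup.freeGroupCongr e := by
  refine freeGroup_mulAut_ext fun a => ?_
  simp only [MulAut.mul_apply]
  obtain rfl | hp := eq_or_ne a p
  · simp
  obtain rfl | hq := eq_or_ne a q
  · simp
  simp [artinAut_of_ne, hp, hq]

end ArtinAut

namespace AffineBraidGroup

open FreeGroup (of lift)

section Presentation

variable {n : ℕ} {H : Type*} [Group H]

theorem lift_eq_one {f : ZMod n → H}
    (hb : 2 < n → ∀ i, f i * f (i + 1) * f i = f (i + 1) * f i * f (i + 1))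
    (hc : 2 < n → ∀ i j, i - j ≠ 1 → i - j ≠ -1 → Commute (f i) (f j)) :
    ∀ r ∈ affineBraidRels n, lift f r = 1 := by
  intro r hr
  unfold affineBraidRels at hr
  split_ifs at hr with hn
  · exact hr.elim
  · rcases hr with ⟨i, rfl⟩ | ⟨i, j, h₁, h₂, rfl⟩
    · simp only [braidRelWord, map_mul, map_inv, FreeGroup.lift_apply_of]
      rw [mul_inv_eq_one, hb (not_le.1 hn)]
    · simp only [commRelWord, map_mul, map_inv, FreeGroup.lift_apply_of]
      rw [mul_inv_eq_one, (hc (not_le.1 hn) i j h₁ h₂).eq]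

theorem gen_braid (hn : 2 < n) (i : ZMod n) :
    affineBraidGen n i * affineBraidGen n (i + 1) * affineBraidGen n i =
      affineBraidGen n (i + 1) * affineBraidGen n i * affineBraidGen n (i + 1) := by
  rw [← mul_inv_eq_one]
  refine PresentedGroup.one_of_mem (rels := affineBraidRels n) (x := braidRelWord i (i + 1)) ?_
  rw [affineBraidRels, if_neg hn.not_ge]
  exact Or.inl ⟨i, rfl⟩

theorem gen_commute (hn : 2 < n) {i j : ZMod n} (h₁ : i - j ≠ 1) (h₂ : i - j ≠ -1) :
    Commute (affineBraidGen n i) (affineBraidGen n j) := by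
  rw [commute_iff_eq, ← mul_inv_eq_one]
  refine PresentedGroup.one_of_mem (rels := affineBraidRels n) (x := commRelWord i j) ?_
  rw [affineBraidRels, if_neg hn.not_ge]
  exact Or.inr ⟨i, j, h₁, h₂, rfl⟩

theorem hom_ext {f g : AffineBraidGroup n →* H}
    (h : ∀ i, f (affineBraidGen n i) = g (affineBraidGen n i)) : f = g :=
  PresentedGroup.ext h

theorem closure_range_gen : Subgroup.closure (Set.range (affineBraidGen n)) = ⊤ :=
  PresentedGroup.closure_range_of _

/-- The affine braid group is free for `n ≤ 2`, where it has no relations. -/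
def mulEquivFreeGroup (hn : n ≤ 2) : AffineBraidGroup n ≃* FreeGroup (ZMod n) :=
  (QuotientGroup.quotientMulEquivOfEq (by
    rw [affineBraidRels, if_pos hn, Subgroup.normalClosure_empty])).trans
      QuotientGroup.quotientBot

end Presentation

variable {n : ℕ}

/-- The endomorphism `s_i ↦ s_{i+c}` of the affine braid group. -/
def shiftHom (c : ZMod n) : AffineBraidGroup n →* AffineBraidGroup n :=
  PresentedGroup.toGroup (f := fun i => affineBraidGen n (i + c)) <| lift_eq_one
    (fun hn i => by simpa only [add_right_comm] using gen_braid hn (i + c))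
    (fun hn i j h₁ h₂ => gen_commute hn (by simpa using h₁) (by simpa using h₂))

@[simp]
theorem shiftHom_gen (c i : ZMod n) :
    shiftHom c (affineBraidGen n i) = affineBraidGen n (i + c) :=
  PresentedGroup.toGroup.of _

theorem shiftHom_comp_neg (c : ZMod n) : (shiftHom c).comp (shiftHom (-c)) = MonoidHom.id _ :=
  hom_ext fun i => by simp

/-- The action of `ℤ` on the affine braid group in which `k` sends `s_i` to `s_{i+k}`. -/
def shift (n : ℕ) : Multiplicative ℤ →* MulAut (AffineBraidGroup n) :=
  MonoidHom.mk'
    (fun k => MonoidHom.toMulEquiv (shiftHom (k.toAdd : ZMod n)) (shiftHom (-(k.toAdd : ZMod n)))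
      (by simpa using shiftHom_comp_neg (-(k.toAdd : ZMod n))) (shiftHom_comp_neg _))
    fun k l => MulEquiv.toMonoidHom_injective <| hom_ext fun i => by
      simp [add_assoc, add_comm (k.toAdd : ZMod n)]

@[simp]
theorem shift_gen (k : Multiplicative ℤ) (i : ZMod n) :
    shift n k (affineBraidGen n i) = affineBraidGen n (i + k.toAdd) :=
  shiftHom_gen _ i

/-- The action of `ℤ` on the free group on `ZMod n` in which `k` sends the generator `i` to
`i + k`. -/
def freeShift (n : ℕ) : Multiplicative ℤ →* MulAut (FreeGroup (ZMod n)) :=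
  MonoidHom.mk' (fun k => FreeGroup.freeGroupCongr (Equiv.addRight (k.toAdd : ZMod n)))
    fun k l => freeGroup_mulAut_ext fun i => by simp [add_assoc, add_comm (k.toAdd : ZMod n)]

@[simp]
theorem freeShift_of (k : Multiplicative ℤ) (i : ZMod n) :
    freeShift n k (of i) = of (i + (k.toAdd : ZMod n)) := by
  simp [freeShift]

theorem natCast_ne_zero {k : ℕ} (hk : 0 < k) (hkn : k < n) : (k : ZMod n) ≠ 0 := by
  rw [Ne, ZMod.natCast_eq_zero_iff]
  exact Nat.not_dvd_of_pos_of_lt hk hkn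

/-- The action of the affine braid group on the free group on `ZMod n` by Artin automorphisms. -/
def artinRep (n : ℕ) : AffineBraidGroup n →* MulAut (FreeGroup (ZMod n)) :=
  PresentedGroup.toGroup (f := fun i => artinAut i (i + 1)) <| lift_eq_one
    (fun hn i => by
      have h₁ : (1 : ZMod n) ≠ 0 := mod_cast natCast_ne_zero one_pos (one_lt_two.trans hn)
      have h₂ : (1 + 1 : ZMod n) ≠ 0 := mod_cast natCast_ne_zero two_pos hn
      exact artinAut_braid (by simpa using h₁) (by simpa using h₁)
        (by simpa [add_assoc] using h₂))
    (fun _ i j h₁ h₂ => by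
      obtain rfl | hij := eq_or_ne i j
      · exact Commute.refl _
      · refine artinAut_commute hij (fun h => h₁ ?_) (fun h => h₂ ?_) (by simpa using hij)
        · rw [h, add_sub_cancel_left]
        · rw [← h]
          ring)

@[simp]
theorem artinRep_gen (i : ZMod n) : artinRep n (affineBraidGen n i) = artinAut i (i + 1) :=
  PresentedGroup.toGroup.of _

theorem artinRep_comp_shift (k : Multiplicative ℤ) :
    (artinRep n).comp (shift n k).toMonoidHom =
      (MulAut.conj (freeShift n k)).toMonoidHom.comp (artinRep n) := by
  refine hom_ext fun i => ?_
  change artinRep n (shift n k (affineBraidGen n i)) =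
    freeShift n k * artinRep n (affineBraidGen n i) * (freeShift n k)⁻¹
  rw [shift_gen, artinRep_gen, artinRep_gen, eq_mul_inv_iff_mul_eq, add_right_comm]
  exact (freeGroupCongr_mul_artinAut _ i (i + 1)).symm

/-- The extended affine braid group: the semidirect product of the affine braid group with the
infinite cyclic group of shifts of its generators. -/
abbrev Extended (n : ℕ) : Type := AffineBraidGroup n ⋊[shift n] Multiplicative ℤ

/-- The action of the extended affine braid group on the free group on `ZMod n`. -/
def extendedRep (n : ℕ) : Extended n →* MulAut (FreeGroup (ZMod n)) :=
  SemidirectProduct.lift (artinRep n) (freeShift n) artinRep_comp_shift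

instance (n : ℕ) : MulDistribMulAction (Extended n) (FreeGroup (ZMod n)) :=
  MulDistribMulAction.compHom _ (extendedRep n)

theorem inl_smul (x : AffineBraidGroup n) (y : FreeGroup (ZMod n)) :
    (SemidirectProduct.inl x : Extended n) • y = artinRep n x y :=
  DFunLike.congr_fun (SemidirectProduct.lift_inl _ _ artinRep_comp_shift x) y

namespace Extended

/-- The image of the generator `s_i` in the extended affine braid group. The index is a natural
number, so that `gen n` is a sequence of period `n`. -/
def gen (n i : ℕ) : Extended n := SemidirectProduct.inl (affineBraidGen n i)

/-- The generator of the cyclic factor of the extended affine braid group, which conjugates `s_i`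
to `s_{i+1}`. -/
def rotation (n : ℕ) : Extended n := SemidirectProduct.inr (Multiplicative.ofAdd 1)

theorem gen_self (n : ℕ) : gen n n = gen n 0 := by simp [gen]

theorem semiconjBy_rotation (n i : ℕ) : SemiconjBy (rotation n) (gen n i) (gen n (i + 1)) := by
  rw [SemiconjBy, ← mul_inv_eq_iff_eq_mul, rotation, gen, ← map_inv, ← SemidirectProduct.inl_aut]
  simp [gen]

theorem rotation_smul (i : ZMod n) : rotation n • of i = of (i + 1) := by
  change extendedRep n (rotation n) (of i) = _
  simp [extendedRep, rotation]

theorem isArtinTwist_gen (n i : ℕ) :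
    IsArtinTwist (gen n i) (i : ZMod n) ((i + 1 : ℕ) : ZMod n) := by
  have hs (y : FreeGroup (ZMod n)) : gen n i • y = artinAut (i : ZMod n) (i + 1) y := by
    rw [gen, inl_smul, artinRep_gen]
  constructor <;> simp +contextual [hs, artinAut_of_ne]

variable {m : ℕ}

theorem natCast_injOn_Iic (m : ℕ) : Set.InjOn (Nat.cast : ℕ → ZMod (m + 1)) (Set.Iic m) :=
  (CharP.natCast_injOn_Iio (ZMod (m + 1)) (m + 1)).mono fun _ => Nat.lt_succ_of_le

theorem exists_natCast_eq (i : ZMod (m + 1)) : ∃ k ≤ m, (k : ZMod (m + 1)) = i :=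
  ⟨i.val, Nat.lt_succ_iff.1 i.val_lt, ZMod.natCast_zmod_val i⟩

theorem isBraidSeq_gen (hm : 1 < m) : IsBraidSeq (gen (m + 1)) m where
  braid i _ := by
    have hbraid := congrArg (SemidirectProduct.inl : _ →* Extended (m + 1))
      (gen_braid (Nat.succ_lt_succ hm) (i : ZMod (m + 1)))
    simpa only [gen, map_mul, Nat.cast_succ] using hbraid
  comm i j hij hj := by
    have hne {a b : ℕ} (ha : a ≤ m) (hb : b ≤ m) (hab : a ≠ b) :
        (a : ZMod (m + 1)) ≠ (b : ZMod (m + 1)) :=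
      (natCast_injOn_Iic m).ne ha hb hab
    refine (gen_commute (Nat.succ_lt_succ hm) (fun h => ?_) fun h => ?_).map _
    · refine hne (a := i) (b := j + 1) (by omega) hj (by omega) ?_
      push_cast
      linear_combination h
    · refine hne (a := i + 1) (b := j) (by omega) (by omega) (by omega) ?_
      push_cast
      linear_combination h

theorem isArtinSeq_gen (hm : 1 < m) : IsArtinSeq (gen (m + 1)) (Nat.cast : ℕ → ZMod (m + 1)) m where
  toIsBraidSeq := isBraidSeq_gen hm
  injOn := natCast_injOn_Iic m
  twist i _ := isArtinTwist_gen (m + 1) i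

/-- The element of the extended affine braid group acting on the free group as conjugation by the
generator `0`. -/
def loop (m : ℕ) : Extended (m + 1) := partialProd (gen (m + 1)) m * (rotation (m + 1))⁻¹

theorem loop_mul_rotation (m : ℕ) : loop m * rotation (m + 1) = partialProd (gen (m + 1)) m :=
  inv_mul_cancel_right _ _

theorem loop_smul (hm : 1 < m) (y : FreeGroup (ZMod (m + 1))) :
    loop m • y = of 0 * y * (of 0)⁻¹ := by
  have hA := isArtinSeq_gen hm
  suffices MulDistribMulAction.toMonoidHom (FreeGroup (ZMod (m + 1))) (loop m) =
      (MulAut.conj (of 0)).toMonoidHom from DFunLike.congr_fun this y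
  refine FreeGroup.ext_hom _ _ ((Equiv.addRight (1 : ZMod (m + 1))).surjective.forall.2 fun i => ?_)
  change loop m • of (i + 1) = of 0 * of (i + 1) * (of 0)⁻¹
  rw [loop, mul_smul, ← rotation_smul, inv_smul_smul, rotation_smul]
  obtain ⟨k, hk, rfl⟩ := exists_natCast_eq i
  obtain rfl | hk := hk.eq_or_lt
  · have hlast : ((k : ZMod (k + 1)) + 1) = 0 := mod_cast ZMod.natCast_self (k + 1)
    rw [← hA.partialProd_inv_smul_zero le_rfl, smul_inv_smul, hlast, Nat.cast_zero,
      mul_inv_cancel_right]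
  · simpa only [Nat.cast_zero, Nat.cast_succ] using hA.partialProd_smul_of_lt hk le_rfl

theorem semiconjBy_rotation_sq (l : ℕ) :
    SemiconjBy (rotation (l + 2) ^ 2) (gen (l + 2) l) (gen (l + 2) 0) := by
  have hwrap := (semiconjBy_rotation (l + 2) (l + 1)).mul_left (semiconjBy_rotation (l + 2) l)
  rwa [gen_self, ← sq] at hwrap

theorem loop_mul_conj_loop (l : ℕ) :
    loop (l + 1) * ((gen (l + 2) 0)⁻¹ * loop (l + 1) * gen (l + 2) 0) =
      partialProd (gen (l + 2)) (l + 1) ^ 2 * (rotation (l + 2) ^ 2)⁻¹ := by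
  set σ := gen (l + 2)
  set ρ := rotation (l + 2)
  have hloop : loop (l + 1) = partialProd σ (l + 1) * ρ⁻¹ := rfl
  have htail : SemiconjBy ρ (partialProd σ l) (partialProd (tailSeq σ) l) :=
    semiconjBy_partialProd fun i _ => semiconjBy_rotation (l + 2) i
  have hwrap : (ρ ^ 2)⁻¹ * σ 0 = σ l * (ρ ^ 2)⁻¹ := (semiconjBy_rotation_sq l).inv_symm_left.eq
  calc loop (l + 1) * ((σ 0)⁻¹ * loop (l + 1) * σ 0)
      = partialProd σ (l + 1) * (ρ⁻¹ * partialProd (tailSeq σ) l) * ρ⁻¹ * σ 0 := by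
        rw [hloop, partialProd_succ' σ l]
        group
    _ = partialProd σ (l + 1) * partialProd σ l * ((ρ ^ 2)⁻¹ * σ 0) := by
        rw [htail.inv_symm_left.eq]
        group
    _ = partialProd σ (l + 1) ^ 2 * (ρ ^ 2)⁻¹ := by
        rw [hwrap, sq (partialProd σ (l + 1)), partialProd_succ σ l]
        group

theorem isTypeBSeq_gen (hm : 1 < m) : IsTypeBSeq (gen (m + 1)) (loop m) m where
  toIsBraidSeq := isBraidSeq_gen hm
  comm_base i hi him := by
    obtain ⟨j, rfl⟩ := Nat.exists_eq_add_of_le' hi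
    have hrot := (semiconjBy_rotation (m + 1) j).inv_symm_left
    exact (((isBraidSeq_gen hm).semiconjBy_partialProd_succ him le_rfl).mul_left hrot).symm
  comm_conj _ := by
    obtain ⟨l, rfl⟩ : ∃ l, m = l + 1 := Nat.exists_eq_succ_of_ne_zero (by omega)
    rw [loop_mul_conj_loop]
    exact ((isBraidSeq_gen hm).semiconjBy_partialProd_sq (lt_add_one l)).mul_left
      (semiconjBy_rotation_sq l).inv_symm_left |>.symm

/-- The homomorphism from the free group to the extended affine braid group through which the inner
automorphisms of the free group are realised. -/
def innerHom (m : ℕ) : FreeGroup (ZMod (m + 1)) →* Extended (m + 1) :=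
  lift fun j => conjSeq (gen (m + 1)) (loop m) j.val

theorem innerHom_of (j : ZMod (m + 1)) :
    innerHom m (of j) = conjSeq (gen (m + 1)) (loop m) j.val :=
  FreeGroup.lift_apply_of ..

theorem innerHom_smul (hm : 1 < m) (w y : FreeGroup (ZMod (m + 1))) :
    innerHom m w • y = w * y * w⁻¹ := by
  suffices (MulDistribMulAction.toMulAut _ (FreeGroup (ZMod (m + 1)))).comp (innerHom m) =
      MulAut.conj from DFunLike.congr_fun (DFunLike.congr_fun this w) y
  refine FreeGroup.ext_hom _ _ fun j => MulEquiv.ext fun y => ?_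
  change innerHom m (of j) • y = of j * y * (of j)⁻¹
  have hj : (partialProd (gen (m + 1)) j.val)⁻¹ • of 0 = of j := by
    simpa using (isArtinSeq_gen hm).partialProd_inv_smul_zero (Nat.lt_succ_iff.1 j.val_lt)
  rw [innerHom_of, conjSeq, mul_smul, mul_smul, loop_smul hm, smul_mul', smul_mul', inv_smul_smul,
    smul_inv', hj]

theorem braidSubgroup_le_ker_rightHom (m : ℕ) :
    braidSubgroup (gen (m + 1)) m ≤
      (SemidirectProduct.rightHom : Extended (m + 1) →* Multiplicative ℤ).ker :=
  braidSubgroup_le fun _ _ => SemidirectProduct.rightHom_inl _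

theorem rightHom_innerHom (w : FreeGroup (ZMod (m + 1))) :
    SemidirectProduct.rightHom (innerHom m w) = (exponentSum w)⁻¹ := by
  suffices SemidirectProduct.rightHom.comp (innerHom m) = invMonoidHom.comp exponentSum from
    DFunLike.congr_fun this w
  refine FreeGroup.ext_hom _ _ fun j => ?_
  have hP {k : ℕ} (hk : k ≤ m) :
      SemidirectProduct.rightHom (partialProd (gen (m + 1)) k) = 1 :=
    braidSubgroup_le_ker_rightHom m (partialProd_mem_braidSubgroup _ hk)
  rw [MonoidHom.comp_apply, innerHom_of, conjSeq, loop, rotation]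
  simp only [map_mul, map_inv, hP (Nat.lt_succ_iff.1 j.val_lt), hP le_rfl,
    SemidirectProduct.rightHom_inr, inv_one, one_mul, mul_one, MonoidHom.comp_apply,
    exponentSum_of, invMonoidHom_apply]

theorem conjSubgroup_le_range_innerHom (m : ℕ) :
    conjSubgroup (gen (m + 1)) (loop m) m ≤ (innerHom m).range := by
  refine (Subgroup.closure_le _).2 (Set.image_subset_iff.2 fun k hk => ⟨of k, ?_⟩)
  rw [innerHom_of, ZMod.val_cast_of_lt (Nat.lt_succ_of_le hk)]

theorem range_inl_le_sup (hm : 0 < m) :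
    (SemidirectProduct.inl : AffineBraidGroup (m + 1) →* Extended (m + 1)).range ≤
      conjSubgroup (gen (m + 1)) (loop m) m ⊔ braidSubgroup (gen (m + 1)) m := by
  set K := conjSubgroup (gen (m + 1)) (loop m) m ⊔ braidSubgroup (gen (m + 1)) m
  have hloop : loop m ∈ K := by
    rw [← conjSeq_zero (gen (m + 1)) (loop m)]
    exact Subgroup.mem_sup_left (conjSeq_mem_conjSubgroup _ _ (Nat.zero_le m))
  have hrot : rotation (m + 1) ∈ K := by
    rw [← Subgroup.mul_mem_cancel_left _ hloop, loop_mul_rotation]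
    exact Subgroup.mem_sup_right (partialProd_mem_braidSubgroup _ le_rfl)
  have hs : ∀ i < m, gen (m + 1) i ∈ K := fun i hi =>
    Subgroup.mem_sup_right (mem_braidSubgroup _ hi)
  rw [MonoidHom.range_eq_map, ← closure_range_gen, MonoidHom.map_closure, Subgroup.closure_le]
  rintro _ ⟨_, ⟨j, rfl⟩, rfl⟩
  obtain ⟨k, hk, rfl⟩ := exists_natCast_eq j
  obtain rfl | hk := hk.eq_or_lt
  · obtain ⟨l, rfl⟩ : ∃ l, k = l + 1 := Nat.exists_eq_succ_of_ne_zero hm.ne'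
    change gen (l + 2) (l + 1) ∈ K
    rw [← mul_inv_eq_iff_eq_mul.2 (semiconjBy_rotation (l + 2) l).eq]
    exact mul_mem (mul_mem hrot (hs l (lt_add_one l))) (inv_mem hrot)
  · exact hs k hk

theorem exists_innerHom_mul_eq_inl (hm : 1 < m) (z : AffineBraidGroup (m + 1)) :
    ∃ w, exponentSum w = 1 ∧
      ∃ b ∈ braidSubgroup (gen (m + 1)) m, innerHom m w * b = SemidirectProduct.inl z := by
  obtain ⟨u, hu, b, hb, huz⟩ :=
    (isTypeBSeq_gen hm).exists_mul_of_mem_sup (range_inl_le_sup (zero_lt_one.trans hm) ⟨z, rfl⟩)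
  obtain ⟨w, rfl⟩ := conjSubgroup_le_range_innerHom m hu
  refine ⟨w, ?_, b, hb, huz⟩
  have hright := congrArg SemidirectProduct.rightHom huz
  rwa [map_mul, rightHom_innerHom, braidSubgroup_le_ker_rightHom m hb, mul_one,
    SemidirectProduct.rightHom_inl, inv_eq_one] at hright

end Extended

open Extended

theorem artinRep_injective (hn : 2 < n) : Function.Injective (artinRep n) := by
  obtain ⟨m, rfl⟩ : ∃ m, n = m + 1 := Nat.exists_eq_succ_of_ne_zero (by omega)
  have hm : 1 < m := Nat.succ_lt_succ_iff.1 hn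
  refine (injective_iff_map_eq_one _).2 fun z hz => ?_
  obtain ⟨w, hsum, b, hb, hz_eq⟩ := exists_innerHom_mul_eq_inl hm z
  have hact (y : FreeGroup (ZMod (m + 1))) : (innerHom m w * b) • y = y := by
    rw [hz_eq, inl_smul, hz, MulAut.one_apply]
  have hboundary : exponentSum (boundaryWord (Nat.cast : ℕ → ZMod (m + 1)) (m + 1)) ≠ 1 := by
    rw [exponentSum_boundaryWord, Ne, ofAdd_eq_one]
    exact mod_cast Nat.succ_ne_zero m
  have hcomm : Commute w (boundaryWord Nat.cast (m + 1)) := by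
    have hfix := hact (boundaryWord Nat.cast (m + 1))
    rwa [mul_smul, (isArtinSeq_gen hm).smul_boundaryWord_of_mem hb, innerHom_smul hm,
      mul_inv_eq_iff_eq_mul] at hfix
  obtain rfl : w = 1 := by
    by_contra hw
    exact hboundary (freeGroup_map_eq_one_of_commute _ hw hsum hcomm)
  rw [map_one, one_mul] at hz_eq hact
  rw [(isArtinSeq_gen hm).eq_one_of_forall_smul_eq hb hact] at hz_eq
  exact SemidirectProduct.inl_injective (hz_eq.symm.trans (map_one _).symm)

theorem exists_artinRep_eq_conj (hn : 2 < n) {v : FreeGroup (ZMod n)} (hv : exponentSum v = 1) :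
    ∃ x, artinRep n x = MulAut.conj v := by
  obtain ⟨m, rfl⟩ : ∃ m, n = m + 1 := Nat.exists_eq_succ_of_ne_zero (by omega)
  have hker : innerHom m v ∈ SemidirectProduct.rightHom.ker := by
    rw [MonoidHom.mem_ker, rightHom_innerHom, hv, inv_one]
  rw [← SemidirectProduct.range_inl_eq_ker_rightHom] at hker
  obtain ⟨x, hx⟩ := hker
  refine ⟨x, MulEquiv.ext fun y => ?_⟩
  rw [← inl_smul, hx, innerHom_smul (Nat.succ_lt_succ_iff.1 hn), MulAut.conj_apply]

theorem artinRep_eq_one_of_mem_center (hn : 2 < n) {z : AffineBraidGroup n}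
    (hz : z ∈ Subgroup.center (AffineBraidGroup n)) : artinRep n z = 1 := by
  have : Fact (1 < n) := ⟨one_lt_two.trans hn⟩
  have hfix : ∀ v ∈ (exponentSum (α := ZMod n)).ker, artinRep n z v = v := fun v hv => by
    obtain ⟨x, hx⟩ := exists_artinRep_eq_conj hn hv
    have hcomm : Commute (MulAut.conj v) (artinRep n z) := by
      have hxz : Commute x z := Subgroup.mem_center_iff.1 hz x
      exact hx ▸ hxz.map (artinRep n)
    refine freeGroup_conj_injective (MulEquiv.ext fun y => ?_)
    have hy := DFunLike.congr_fun hcomm.eq ((artinRep n z)⁻¹ y)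
    simpa using hy.symm
  obtain ⟨i, j, hij⟩ := exists_pair_ne (ZMod n)
  have hid := freeGroup_hom_eq_id_of_forall_mem_normal (N := exponentSum.ker)
    (by simp [MonoidHom.mem_ker]) (by simp [MonoidHom.mem_ker])
    (freeGroup_not_commute_of_mul_inv hij) (f := (artinRep n z).toMonoidHom) hfix
  exact MulEquiv.toMonoidHom_injective hid

end AffineBraidGroup

/-- For every `n ≥ 2`, the center of the affine braid group `B(Ã_{n−1})` is trivial. -/
theorem affineBraidGroup_center_trivial (n : ℕ) (hn : 2 ≤ n) :
    Subgroup.center (AffineBraidGroup n) = ⊥ := by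
  refine (Subgroup.eq_bot_iff_forall _).2 fun z hz => ?_
  rcases hn.eq_or_lt with rfl | hn
  · have hcenter := MulEquivClass.apply_mem_center (AffineBraidGroup.mulEquivFreeGroup le_rfl) hz
    rw [← Subgroup.coe_center, freeGroup_center_eq_bot] at hcenter
    simpa using hcenter
  · apply AffineBraidGroup.artinRep_injective hn
    rw [AffineBraidGroup.artinRep_eq_one_of_mem_center hn hz, map_one]
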